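/- arXiv:2409.15459 — 6 statements merged into one kernel-verified Lean document; each statement's English description precedes it below -/
import Mathlib

section
/- Let κ ≥ 0, λ > 0, and let b : [0,1] → ℝ be a twice continuously differentiable unit trading strategy. Suppose a : [0,1] → ℝ is a twice continuously differentiable unit trading strategy such that Cost_A(a, b) ≤ Cost_A(g, b) for every twice continuously differentiable unit trading strategy g. Then a satisfies the Euler–Lagrange equation a''(t) = −(λ/2)(b''(t) + κ b'(t)) for all t ∈ [0,1]. -/
open Real

/-- The total cost of trader A trading strategy `a` in competition with the
`lam`-scaled strategy `b`, with market impact coefficient `κ`. -/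
noncomputable def costA (κ lam : ℝ) (a b : ℝ → ℝ) : ℝ :=
  ∫ t in (0:ℝ)..1,
    ((deriv a t + lam * deriv b t) * deriv a t + κ * (a t + lam * b t) * deriv a t)

/-!
The cost is quadratic in `a`, so along a line `a + ε • h` with `h` vanishing at both endpoints it
is a quadratic polynomial in `ε`; if `a` is optimal, its linear coefficient, the first variation at
`a` in the direction `h`, must vanish. Integration by parts turns the first variation into
`-∫ h * (2 a'' + lam (b'' + κ b'))`: the `a'` produced by differentiating the factor `a + lam b`
cancels against the `a'` of the impact term. As `h` is arbitrary, the second factor vanishes.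
-/

section FundamentalLemma

open MeasureTheory Set
open scoped ContDiff

theorem eqOn_zero_of_intervalIntegral_contDiff_smul_eq_zero {F : Type*} [NormedAddCommGroup F]
    [NormedSpace ℝ F] [CompleteSpace F] {f : ℝ → F} {x y : ℝ} (hxy : x < y)
    (hf : ContinuousOn f (Icc x y))
    (hint : ∀ h : ℝ → ℝ, ContDiff ℝ ∞ h → HasCompactSupport h → tsupport h ⊆ Ioo x y →
      ∫ t in x..y, h t • f t = 0) :
    EqOn f 0 (Icc x y) := by
  have hloc : LocallyIntegrableOn f (Ioo x y) :=
    (hf.mono Ioo_subset_Icc_self).locallyIntegrableOn measurableSet_Ioo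
  have hae : ∀ᵐ t, t ∈ Ioo x y → f t = 0 := by
    refine isOpen_Ioo.ae_eq_zero_of_integral_contDiff_smul_eq_zero hloc fun h hh hcpt hsupp ↦ ?_
    have hzero : ∀ t, t ∉ Ioo x y → h t • f t = 0 := fun t ht ↦ by
      rw [image_eq_zero_of_notMem_tsupport fun hmem ↦ ht (hsupp hmem), zero_smul]
    rw [← setIntegral_eq_integral_of_forall_compl_eq_zero hzero, ← integral_Ioc_eq_integral_Ioo,
      ← intervalIntegral.integral_of_le hxy.le]
    exact hint h hh hcpt hsupp
  refine Measure.eqOn_Icc_of_ae_eq volume hxy.ne ?_ hf continuousOn_const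
  rw [← restrict_Ioo_eq_restrict_Icc]
  exact (ae_restrict_iff' measurableSet_Ioo).2 hae

end FundamentalLemma

theorem eq_zero_of_forall_mul_add_sq_mul_nonneg {K : Type*} [Field K] [LinearOrder K]
    [IsStrictOrderedRing K] {p q : K} (hpq : ∀ ε : K, 0 ≤ ε * p + ε ^ 2 * q) : p = 0 := by
  have hdiscrim : discrim q p 0 ≤ 0 := discrim_le_zero fun ε ↦ by linear_combination hpq ε
  rw [discrim, mul_zero, sub_zero] at hdiscrim
  exact (sq_nonpos_iff p).1 hdiscrim

/-- The first variation at `a` of the cost against `b`: the derivative at `ε = 0` of the cost of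
`a + ε • h`, written as an integral that is linear in the direction `h`. -/
noncomputable def costAFirstVariation (κ lam : ℝ) (a b h : ℝ → ℝ) : ℝ :=
  ∫ t in (0:ℝ)..1,
    ((2 * deriv a t + lam * deriv b t + κ * (a t + lam * b t)) * deriv h t + κ * deriv a t * h t)

section Cost

open Set
open scoped ContDiff

variable {κ lam : ℝ} {a b h : ℝ → ℝ}

theorem costA_add_smul (ha : ContDiff ℝ 1 a) (hb : ContDiff ℝ 1 b) (hh : ContDiff ℝ 1 h) (ε : ℝ) :
    costA κ lam (a + ε • h) b =
      costA κ lam a b + ε * costAFirstVariation κ lam a b h + ε ^ 2 * costA κ lam h 0 := by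
  have hderiv (t : ℝ) : deriv (a + ε • h) t = deriv a t + ε * deriv h t := by
    have hat := ha.differentiable one_ne_zero t
    have hht := hh.differentiable one_ne_zero t
    rw [deriv_add hat (hht.const_smul ε), deriv_const_smul ε hht, smul_eq_mul]
  simp only [costA, costAFirstVariation, hderiv, deriv_zero, Pi.add_apply, Pi.smul_apply,
    Pi.zero_apply, smul_eq_mul]
  rw [← intervalIntegral.integral_const_mul, ← intervalIntegral.integral_const_mul,
    ← intervalIntegral.integral_add, ← intervalIntegral.integral_add]
  · refine intervalIntegral.integral_congr fun t _ ↦ ?_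
    ring
  all_goals
    apply Continuous.intervalIntegrable
    fun_prop

theorem costAFirstVariation_eq_neg_integral (ha : ContDiff ℝ 2 a) (hb : ContDiff ℝ 2 b)
    (hh : ContDiff ℝ 1 h) (h0 : h 0 = 0) (h1 : h 1 = 0) :
    costAFirstVariation κ lam a b h =
      -∫ t in (0:ℝ)..1,
        h t * (2 * deriv (deriv a) t + lam * (deriv (deriv b) t + κ * deriv b t)) := by
  let p : ℝ → ℝ := fun t ↦ 2 * deriv a t + lam * deriv b t + κ * (a t + lam * b t)
  let p' : ℝ → ℝ := fun t ↦
    2 * deriv (deriv a) t + lam * deriv (deriv b) t + κ * (deriv a t + lam * deriv b t)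
  have hp (t : ℝ) : HasDerivAt p (p' t) t := by
    have hat := (ha.differentiable two_ne_zero t).hasDerivAt
    have hbt := (hb.differentiable two_ne_zero t).hasDerivAt
    have hat' := (ha.differentiable_deriv_two t).hasDerivAt
    have hbt' := (hb.differentiable_deriv_two t).hasDerivAt
    exact ((hat'.const_mul 2).add (hbt'.const_mul lam)).add
      ((hat.add (hbt.const_mul lam)).const_mul κ)
  have ha' : Continuous (deriv a) := ha.continuous_deriv one_le_two
  have hb' : Continuous (deriv b) := hb.continuous_deriv one_le_two
  have hp'_cont : Continuous p' := by fun_prop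
  have hh' : Continuous (deriv h) := hh.continuous_deriv_one
  rw [eq_neg_iff_add_eq_zero, costAFirstVariation, ← intervalIntegral.integral_add
    (Continuous.intervalIntegrable (by fun_prop) 0 1)
    (Continuous.intervalIntegrable (by fun_prop) 0 1)]
  calc _ = ∫ t in (0:ℝ)..1, (p' t * h t + p t * deriv h t) := by
        refine intervalIntegral.integral_congr fun t _ ↦ ?_
        simp only [p, p']
        ring
    _ = p 1 * h 1 - p 0 * h 0 :=
        intervalIntegral.integral_deriv_mul_eq_sub (fun t _ ↦ hp t)
          (fun t _ ↦ (hh.differentiable one_ne_zero t).hasDerivAt)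
          (hp'_cont.intervalIntegrable 0 1) (hh'.intervalIntegrable 0 1)
    _ = 0 := by rw [h0, h1, mul_zero, mul_zero, sub_zero]

theorem costAFirstVariation_eq_zero_of_forall_costA_le (ha : ContDiff ℝ 1 a) (hb : ContDiff ℝ 1 b)
    (hh : ContDiff ℝ 1 h) (hmin : ∀ ε : ℝ, costA κ lam a b ≤ costA κ lam (a + ε • h) b) :
    costAFirstVariation κ lam a b h = 0 :=
  eq_zero_of_forall_mul_add_sq_mul_nonneg (q := costA κ lam h 0) fun ε ↦ by
    linarith [hmin ε, costA_add_smul (κ := κ) (lam := lam) ha hb hh ε]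

theorem euler_lagrange_of_forall_costAFirstVariation_eq_zero (ha : ContDiff ℝ 2 a)
    (hb : ContDiff ℝ 2 b)
    (hstat : ∀ h : ℝ → ℝ, ContDiff ℝ ∞ h → h 0 = 0 → h 1 = 0 →
      costAFirstVariation κ lam a b h = 0) :
    ∀ t ∈ Icc (0:ℝ) 1,
      deriv (deriv a) t = -(lam/2) * (deriv (deriv b) t + κ * deriv b t) := by
  have hb' : Continuous (deriv b) := hb.continuous_deriv one_le_two
  have hEL : EqOn (fun t ↦ 2 * deriv (deriv a) t + lam * (deriv (deriv b) t + κ * deriv b t)) 0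
      (Icc 0 1) := by
    refine eqOn_zero_of_intervalIntegral_contDiff_smul_eq_zero one_pos
      (Continuous.continuousOn (by fun_prop)) fun h hh _ hsupp ↦ ?_
    have h0 : h 0 = 0 :=
      image_eq_zero_of_notMem_tsupport fun hmem ↦ lt_irrefl 0 (hsupp hmem).1
    have h1 : h 1 = 0 :=
      image_eq_zero_of_notMem_tsupport fun hmem ↦ lt_irrefl 1 (hsupp hmem).2
    have hvar := hstat h hh h0 h1
    rwa [costAFirstVariation_eq_neg_integral ha hb (hh.of_le ENat.LEInfty.out) h0 h1,
      neg_eq_zero] at hvar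
  intro t ht
  have hzero : 2 * deriv (deriv a) t + lam * (deriv (deriv b) t + κ * deriv b t) = 0 := hEL ht
  linear_combination hzero / 2

end Cost

theorem best_response_satisfies_euler_lagrange_general (κ lam : ℝ) (a b : ℝ → ℝ)
    (hb : ContDiff ℝ 2 b) (ha : ContDiff ℝ 2 a)
    (hmin : ∀ g : ℝ → ℝ, ContDiff ℝ 2 g → g 0 = a 0 → g 1 = a 1 →
      costA κ lam a b ≤ costA κ lam g b) :
    ∀ t ∈ Set.Icc (0:ℝ) 1,
      deriv (deriv a) t = -(lam/2) * (deriv (deriv b) t + κ * deriv b t) := by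
  refine euler_lagrange_of_forall_costAFirstVariation_eq_zero ha hb fun h hh h0 h1 ↦ ?_
  have hh2 : ContDiff ℝ 2 h := hh.of_le ENat.LEInfty.out
  have hle (ε : ℝ) : costA κ lam a b ≤ costA κ lam (a + ε • h) b :=
    hmin (a + ε • h) (ha.add (hh2.const_smul ε)) (by simp [h0]) (by simp [h1])
  exact costAFirstVariation_eq_zero_of_forall_costA_le (ha.of_le one_le_two)
    (hb.of_le one_le_two) (hh2.of_le one_le_two) hle

theorem best_response_satisfies_euler_lagrange (κ lam : ℝ) (hκ : 0 ≤ κ) (hlam : 0 < lam)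
    (a b : ℝ → ℝ) (hb : ContDiff ℝ 2 b) (hb0 : b 0 = 0) (hb1 : b 1 = 1)
    (ha : ContDiff ℝ 2 a) (ha0 : a 0 = 0) (ha1 : a 1 = 1)
    (hmin : ∀ g : ℝ → ℝ, ContDiff ℝ 2 g → g 0 = 0 → g 1 = 1 →
      costA κ lam a b ≤ costA κ lam g b) :
    ∀ t ∈ Set.Icc (0:ℝ) 1,
      deriv (deriv a) t = -(lam/2) * (deriv (deriv b) t + κ * deriv b t) :=
  best_response_satisfies_euler_lagrange_general κ lam a b hb ha fun g hg hg0 hg1 ↦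
    hmin g hg (hg0.trans ha0) (hg1.trans ha1)
end

section
/- Let κ ≥ 0, λ > 0, and let b : [0,1] → ℝ be a twice continuously differentiable unit trading strategy. Suppose a : [0,1] → ℝ is a twice continuously differentiable unit trading strategy satisfying a''(t) = −(λ/2)(b''(t) + κ b'(t)) for all t ∈ [0,1]. Then a is a global best response to b: for every continuously differentiable unit trading strategy g, Cost_A(a, b) ≤ Cost_A(g, b). -/
open Real

/-!
Trader A's own permanent impact `κ a a'` is an exact derivative, so up to a boundary term the cost
is the strictly convex functional `∫ a'² + p a'`, where `p = λ (b' + κ b)` is the impact of the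
competitor. The Euler–Lagrange equation says that its first integral `2 a' + p` is a constant `c`,
whence the integrand at `g` exceeds the one at `a` by `(g' - a')² + c (g' - a')`; the linear term
integrates to zero because `g` and `a` have the same endpoints.
-/

open MeasureTheory Set

theorem integral_sq_add_mul_le_of_ae_eq_const {α : Type*} [MeasurableSpace α] {μ : Measure α}
    {p u v : α → ℝ} {c : ℝ} (hc : ∀ᵐ x ∂μ, 2 * u x + p x = c)
    (hu : Integrable u μ) (hv : Integrable v μ) (huv : ∫ x, v x ∂μ = ∫ x, u x ∂μ)
    (hpu : Integrable (fun x ↦ u x ^ 2 + p x * u x) μ)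
    (hpv : Integrable (fun x ↦ v x ^ 2 + p x * v x) μ) :
    ∫ x, u x ^ 2 + p x * u x ∂μ ≤ ∫ x, v x ^ 2 + p x * v x ∂μ := by
  have hlin : Integrable (fun x ↦ c * (v x - u x)) μ := (hv.sub hu).const_mul c
  have hlin_zero : ∫ x, c * (v x - u x) ∂μ = 0 := by
    rw [integral_const_mul, integral_sub hv hu, huv, sub_self, mul_zero]
  calc ∫ x, u x ^ 2 + p x * u x ∂μ
      = ∫ x, (u x ^ 2 + p x * u x) + c * (v x - u x) ∂μ := by
        rw [integral_add hpu hlin, hlin_zero, add_zero]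
    _ ≤ ∫ x, v x ^ 2 + p x * v x ∂μ := by
        refine integral_mono_ae (hpu.add hlin) hpv ?_
        filter_upwards [hc] with x hx
        have hsquare : v x ^ 2 + p x * v x
            = u x ^ 2 + p x * u x + c * (v x - u x) + (v x - u x) ^ 2 := by
          rw [← hx]; ring
        exact hsquare ▸ le_add_of_nonneg_right (sq_nonneg _)

theorem integral_mul_deriv_self_of_absolutelyContinuous {f : ℝ → ℝ} {s r : ℝ}
    (hf : AbsolutelyContinuousOnInterval f s r) :
    ∫ t in s..r, f t * deriv f t = (f r ^ 2 - f s ^ 2) / 2 := by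
  have hparts := hf.integral_mul_deriv_eq_deriv_mul hf
  simp only [mul_comm (deriv f _)] at hparts
  linarith

/-- The Sobolev class `H¹(0, 1)` of trading strategies with finite energy, encoded by the absolutely
continuous representative and its pointwise derivative. It is the natural domain of `costA`. -/
structure HasFiniteEnergy (f : ℝ → ℝ) : Prop where
  absolutelyContinuous : AbsolutelyContinuousOnInterval f 0 1
  memLp_deriv : MemLp (deriv f) 2 (volume.restrict (Ioc 0 1))

/-- The displacement of the price paid by trader A caused by the competitor's scaled strategy
`lam * b`: a temporary part proportional to `deriv b` and a permanent part proportional to `b`. -/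
noncomputable def competitorImpact (κ lam : ℝ) (b : ℝ → ℝ) (t : ℝ) : ℝ :=
  lam * (deriv b t + κ * b t)

namespace HasFiniteEnergy

variable {f b : ℝ → ℝ}

theorem of_contDiff (hf : ContDiff ℝ 1 f) : HasFiniteEnergy f where
  absolutelyContinuous := hf.contDiffOn.absolutelyContinuousOnInterval
  memLp_deriv := by
    have hderiv : Continuous (deriv f) := hf.continuous_deriv le_rfl
    exact (memLp_two_iff_integrable_sq hderiv.aestronglyMeasurable).2
      (hderiv.pow 2).integrableOn_Ioc

theorem integrable_deriv (hf : HasFiniteEnergy f) :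
    Integrable (deriv f) (volume.restrict (Ioc 0 1)) :=
  hf.memLp_deriv.integrable one_le_two

theorem integral_deriv (hf : HasFiniteEnergy f) : ∫ t in Ioc 0 1, deriv f t = f 1 - f 0 := by
  rw [← intervalIntegral.integral_of_le zero_le_one, hf.absolutelyContinuous.integral_deriv_eq_sub]

theorem integrable_mul_deriv (hb : HasFiniteEnergy b) (hf : HasFiniteEnergy f) :
    Integrable (fun t ↦ b t * deriv f t) (volume.restrict (Ioc 0 1)) := by
  rw [← IntegrableOn, ← intervalIntegrable_iff_integrableOn_Ioc_of_le zero_le_one]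
  exact hf.absolutelyContinuous.intervalIntegrable_deriv.continuousOn_mul
    hb.absolutelyContinuous.continuousOn

theorem integrable_sq_add_competitorImpact_mul (hf : HasFiniteEnergy f) (hb : HasFiniteEnergy b)
    (κ lam : ℝ) :
    Integrable (fun t ↦ deriv f t ^ 2 + competitorImpact κ lam b t * deriv f t)
      (volume.restrict (Ioc 0 1)) := by
  have htemp : Integrable (fun t ↦ deriv b t * deriv f t) (volume.restrict (Ioc 0 1)) :=
    hb.memLp_deriv.integrable_mul hf.memLp_deriv
  have hperm := hb.integrable_mul_deriv hf
  refine (hf.memLp_deriv.integrable_sq.add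
    ((htemp.add (hperm.const_mul κ)).const_mul lam)).congr (.of_forall fun t ↦ ?_)
  simp only [competitorImpact, Pi.add_apply]
  ring

end HasFiniteEnergy

theorem costA_eq_integral_add_boundary {f b : ℝ → ℝ} (hf : HasFiniteEnergy f)
    (hb : HasFiniteEnergy b) (κ lam : ℝ) :
    costA κ lam f b = (∫ t in Ioc 0 1, deriv f t ^ 2 + competitorImpact κ lam b t * deriv f t)
      + κ * ((f 1 ^ 2 - f 0 ^ 2) / 2) := by
  rw [← integral_mul_deriv_self_of_absolutelyContinuous hf.absolutelyContinuous, costA,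
    intervalIntegral.integral_of_le zero_le_one, intervalIntegral.integral_of_le zero_le_one,
    ← integral_const_mul, ← integral_add (hf.integrable_sq_add_competitorImpact_mul hb κ lam)
      ((hf.integrable_mul_deriv hf).const_mul κ)]
  congr 1 with t
  simp only [competitorImpact]
  ring

theorem two_mul_deriv_add_competitorImpact_eq_of_eulerLagrange {κ lam s r : ℝ} {a b : ℝ → ℝ}
    (ha' : Differentiable ℝ (deriv a)) (hb : Differentiable ℝ b)
    (hb' : Differentiable ℝ (deriv b))
    (hEL : ∀ t ∈ Ico s r,
      deriv (deriv a) t = -(lam / 2) * (deriv (deriv b) t + κ * deriv b t)) :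
    ∀ t ∈ Icc s r,
      2 * deriv a t + competitorImpact κ lam b t
        = 2 * deriv a s + competitorImpact κ lam b s := by
  have hderiv (t : ℝ) : HasDerivAt (fun t ↦ 2 * deriv a t + competitorImpact κ lam b t)
      (2 * deriv (deriv a) t + lam * (deriv (deriv b) t + κ * deriv b t)) t :=
    ((ha' t).hasDerivAt.const_mul 2).add
      (((hb' t).hasDerivAt.add ((hb t).hasDerivAt.const_mul κ)).const_mul lam)
  refine constant_of_has_deriv_right_zero (fun t _ ↦ (hderiv t).continuousAt.continuousWithinAt)
    fun t ht ↦ ((hderiv t).congr_deriv ?_).hasDerivWithinAt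
  rw [hEL t ht]
  ring

theorem euler_lagrange_implies_best_response_general {κ lam c : ℝ} {a b : ℝ → ℝ}
    (ha : HasFiniteEnergy a) (hb : HasFiniteEnergy b)
    (hc : ∀ᵐ t ∂volume.restrict (Ioc 0 1), 2 * deriv a t + competitorImpact κ lam b t = c) :
    ∀ g : ℝ → ℝ, HasFiniteEnergy g → g 0 = a 0 → g 1 = a 1 →
      costA κ lam a b ≤ costA κ lam g b := by
  intro g hg hg0 hg1
  have hincrement : ∫ t in Ioc 0 1, deriv g t = ∫ t in Ioc 0 1, deriv a t := by
    rw [hg.integral_deriv, ha.integral_deriv, hg0, hg1]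
  rw [costA_eq_integral_add_boundary ha hb, costA_eq_integral_add_boundary hg hb, hg0, hg1]
  gcongr ?_ + _
  exact integral_sq_add_mul_le_of_ae_eq_const hc ha.integrable_deriv hg.integrable_deriv hincrement
    (ha.integrable_sq_add_competitorImpact_mul hb κ lam)
    (hg.integrable_sq_add_competitorImpact_mul hb κ lam)

theorem euler_lagrange_implies_best_response (κ lam : ℝ) (hκ : 0 ≤ κ) (hlam : 0 < lam)
    (a b : ℝ → ℝ) (hb : ContDiff ℝ 2 b) (hb0 : b 0 = 0) (hb1 : b 1 = 1)
    (ha : ContDiff ℝ 2 a) (ha0 : a 0 = 0) (ha1 : a 1 = 1)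
    (hEL : ∀ t ∈ Set.Icc (0:ℝ) 1,
      deriv (deriv a) t = -(lam/2) * (deriv (deriv b) t + κ * deriv b t)) :
    ∀ g : ℝ → ℝ, ContDiff ℝ 1 g → g 0 = 0 → g 1 = 1 →
      costA κ lam a b ≤ costA κ lam g b := by
  intro g hg hg0 hg1
  have hconst := two_mul_deriv_add_competitorImpact_eq_of_eulerLagrange
    ha.differentiable_deriv_two (hb.differentiable two_ne_zero) hb.differentiable_deriv_two
    fun t ht ↦ hEL t (Ico_subset_Icc_self ht)
  exact euler_lagrange_implies_best_response_general (.of_contDiff (ha.of_le one_le_two))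
    (.of_contDiff (hb.of_le one_le_two))
    (ae_restrict_of_forall_mem measurableSet_Ioc fun t ht ↦ hconst t (Ioc_subset_Icc_self ht))
    g (.of_contDiff hg) (hg0.trans ha0.symm) (hg1.trans ha1.symm)
end

section
/- Let κ ≥ 0, λ > 0, and let b : [0,1] → ℝ be a twice continuously differentiable unit trading strategy. If a₁ and a₂ are twice continuously differentiable unit trading strategies each of which minimizes Cost_A(·, b) over all twice continuously differentiable unit trading strategies, then a₁(t) = a₂(t) for all t ∈ [0,1]; i.e., the best response to b is unique. -/
open Real

/-!
Along a segment of strategies the cost is quadratic, and its leading coefficient is the cost of the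
difference `h = a₁ - a₂` against an idle competitor, `∫ h'² + κ ∫ h h'`. If the two strategies have
the same endpoints, then `h 0 = h 1 = 0`, so the market impact term `∫ h h'` vanishes and `∫ h'²`
is left: the cost is strictly convex. For two minimizers, the midpoint would be cheaper unless
`∫ h'²` vanishes, and with it `h` on `[0, 1]`.
-/

open Set intervalIntegral

/-- The trading strategies of class `C^n` whose position moves from `x` at time `0` to `y` at
time `1`, among which trader A looks for a best response; the unit strategies are those with
`x = 0` and `y = 1`. A strategy is `C^n` on all of `ℝ`, although `costA` only sees it on
`[0, 1]`. -/
def tradingStrategies (n : WithTop ℕ∞) (x y : ℝ) : Set (ℝ → ℝ) :=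
  {a | ContDiff ℝ n a ∧ a 0 = x ∧ a 1 = y}

theorem convex_tradingStrategies (n : WithTop ℕ∞) (x y : ℝ) :
    Convex ℝ (tradingStrategies n x y) := by
  rintro a₁ ⟨ha₁, ha₁0, ha₁1⟩ a₂ ⟨ha₂, ha₂0, ha₂1⟩ s t - - hst
  refine ⟨(ha₁.const_smul s).add (ha₂.const_smul t), ?_, ?_⟩
  · simp only [Pi.add_apply, Pi.smul_apply, ha₁0, ha₂0, Convex.combo_self hst]
  · simp only [Pi.add_apply, Pi.smul_apply, ha₁1, ha₂1, Convex.combo_self hst]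

theorem eqOn_zero_of_integral_sq_deriv_nonpos {h : ℝ → ℝ} {u v : ℝ} (hh : ContDiff ℝ 1 h)
    (hu : h u = 0) (hint : ∫ t in u..v, deriv h t ^ 2 ≤ 0) : EqOn h 0 (Icc u v) := by
  have hcont : Continuous (deriv h) := hh.continuous_deriv_one
  have hderiv : ∀ t ∈ Ico u v, deriv h t = 0 := by
    intro t ht
    by_contra hne
    exact hint.not_gt <| integral_pos (ht.1.trans_lt ht.2) (hcont.pow 2).continuousOn
      (fun s _ => sq_nonneg _) ⟨t, Ico_subset_Icc_self ht, by positivity⟩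
  intro t ht
  rw [Pi.zero_apply, ← hu]
  refine constant_of_has_deriv_right_zero hh.continuous.continuousOn (fun s hs => ?_) t ht
  simpa only [hderiv s hs] using (hh.differentiable_one s).hasDerivAt.hasDerivWithinAt

section Cost

variable (κ lam : ℝ)

theorem costA_zero_right {h : ℝ → ℝ} (hh : ContDiff ℝ 1 h) :
    costA κ lam h 0 = (∫ t in (0:ℝ)..1, deriv h t ^ 2) + κ * ((h 1 ^ 2 - h 0 ^ 2) / 2) := by
  have hcont : Continuous (deriv h) := hh.continuous_deriv_one
  have himpact : ∫ t in (0:ℝ)..1, h t * deriv h t = (h 1 ^ 2 - h 0 ^ 2) / 2 := by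
    rw [← integral_id]
    exact integral_comp_mul_deriv (fun t _ => (hh.differentiable_one t).hasDerivAt)
      hcont.continuousOn continuous_id
  rw [← himpact, ← integral_const_mul, ← integral_add
    (Continuous.intervalIntegrable (by fun_prop) 0 1)
    (Continuous.intervalIntegrable (by fun_prop) 0 1)]
  refine integral_congr fun t _ => ?_
  simp only [deriv_zero, Pi.zero_apply]
  ring

theorem intervalIntegrable_costA_integrand {a b : ℝ → ℝ} (ha : ContDiff ℝ 1 a)
    (hb : ContDiff ℝ 1 b) (u v : ℝ) :
    IntervalIntegrable (fun t =>
      (deriv a t + lam * deriv b t) * deriv a t + κ * (a t + lam * b t) * deriv a t)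
      MeasureTheory.volume u v := by
  have ha' : Continuous (deriv a) := ha.continuous_deriv_one
  have hcost := ((ha'.add (hb.continuous_deriv_one.const_mul lam)).mul ha').add
    (((ha.continuous.add (hb.continuous.const_mul lam)).const_mul κ).mul ha')
  exact hcost.intervalIntegrable u v

theorem costA_convex_combo {a₁ a₂ b : ℝ → ℝ} (ha₁ : ContDiff ℝ 1 a₁) (ha₂ : ContDiff ℝ 1 a₂)
    (hb : ContDiff ℝ 1 b) {s t : ℝ} (hst : s + t = 1) :
    costA κ lam (s • a₁ + t • a₂) b =
      s * costA κ lam a₁ b + t * costA κ lam a₂ b - s * t * costA κ lam (a₁ - a₂) 0 := by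
  have hd₁ (r : ℝ) : HasDerivAt a₁ (deriv a₁ r) r := (ha₁.differentiable_one r).hasDerivAt
  have hd₂ (r : ℝ) : HasDerivAt a₂ (deriv a₂ r) r := (ha₂.differentiable_one r).hasDerivAt
  have hcombo (r : ℝ) : deriv (s • a₁ + t • a₂) r = s * deriv a₁ r + t * deriv a₂ r :=
    (((hd₁ r).const_smul s).add ((hd₂ r).const_smul t)).deriv
  have hsub (r : ℝ) : deriv (a₁ - a₂) r = deriv a₁ r - deriv a₂ r := ((hd₁ r).sub (hd₂ r)).deriv
  obtain rfl : t = 1 - s := eq_sub_of_add_eq' hst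
  have hint₁ := (intervalIntegrable_costA_integrand κ lam ha₁ hb 0 1).const_mul s
  have hint₂ := (intervalIntegrable_costA_integrand κ lam ha₂ hb 0 1).const_mul (1 - s)
  have hint₀ := (intervalIntegrable_costA_integrand κ lam (a := a₁ - a₂) (b := 0)
    (ha₁.sub ha₂) contDiff_const 0 1).const_mul (s * (1 - s))
  simp only [costA, ← integral_const_mul]
  rw [← integral_add hint₁ hint₂, ← integral_sub (hint₁.add hint₂) hint₀]
  refine integral_congr fun r _ => ?_
  simp only [hcombo, hsub, deriv_zero, Pi.add_apply, Pi.sub_apply, Pi.smul_apply, Pi.zero_apply,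
    smul_eq_mul]
  ring

theorem best_response_unique_general {n : WithTop ℕ∞} (hn : 1 ≤ n) {x y : ℝ} {a₁ a₂ b : ℝ → ℝ}
    (hb : ContDiff ℝ 1 b)
    (ha₁ : a₁ ∈ tradingStrategies n x y) (ha₂ : a₂ ∈ tradingStrategies n x y)
    (hmin₁ : IsMinOn (costA κ lam · b) (tradingStrategies n x y) a₁)
    (hmin₂ : IsMinOn (costA κ lam · b) (tradingStrategies n x y) a₂) :
    EqOn a₁ a₂ (Icc 0 1) := by
  have hC₁ : ContDiff ℝ 1 a₁ := ha₁.1.of_le hn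
  have hC₂ : ContDiff ℝ 1 a₂ := ha₂.1.of_le hn
  have hdiff : ContDiff ℝ 1 (a₁ - a₂) := hC₁.sub hC₂
  have hdiff0 : (a₁ - a₂) 0 = 0 := sub_eq_zero.mpr (ha₁.2.1.trans ha₂.2.1.symm)
  have hdiff1 : (a₁ - a₂) 1 = 0 := sub_eq_zero.mpr (ha₁.2.2.trans ha₂.2.2.symm)
  have hmid : (1 / 2 : ℝ) • a₁ + (1 / 2 : ℝ) • a₂ ∈ tradingStrategies n x y :=
    convex_tradingStrategies n x y ha₁ ha₂ one_half_pos.le one_half_pos.le (add_halves 1)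
  have hle₁ := isMinOn_iff.mp hmin₁ _ hmid
  have hle₂ := isMinOn_iff.mp hmin₂ _ hmid
  have hcombo := costA_convex_combo κ lam hC₁ hC₂ hb (add_halves (1 : ℝ))
  have hcost := costA_zero_right κ lam hdiff
  have hint : ∫ t in (0:ℝ)..1, deriv (a₁ - a₂) t ^ 2 ≤ 0 := by
    rw [hdiff0, hdiff1] at hcost
    linarith
  intro t ht
  exact sub_eq_zero.mp (eqOn_zero_of_integral_sq_deriv_nonpos hdiff hdiff0 hint ht)

end Cost

theorem best_response_unique (κ lam : ℝ) (hκ : 0 ≤ κ) (hlam : 0 < lam)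
    (b : ℝ → ℝ) (hb : ContDiff ℝ 2 b) (hb0 : b 0 = 0) (hb1 : b 1 = 1)
    (a₁ a₂ : ℝ → ℝ)
    (ha₁ : ContDiff ℝ 2 a₁) (ha₁0 : a₁ 0 = 0) (ha₁1 : a₁ 1 = 1)
    (ha₂ : ContDiff ℝ 2 a₂) (ha₂0 : a₂ 0 = 0) (ha₂1 : a₂ 1 = 1)
    (hmin₁ : ∀ g : ℝ → ℝ, ContDiff ℝ 2 g → g 0 = 0 → g 1 = 1 →
      costA κ lam a₁ b ≤ costA κ lam g b)
    (hmin₂ : ∀ g : ℝ → ℝ, ContDiff ℝ 2 g → g 0 = 0 → g 1 = 1 →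
      costA κ lam a₂ b ≤ costA κ lam g b) :
    ∀ t ∈ Set.Icc (0:ℝ) 1, a₁ t = a₂ t :=
  best_response_unique_general κ lam one_le_two (hb.of_le one_le_two) ⟨ha₁, ha₁0, ha₁1⟩
    ⟨ha₂, ha₂0, ha₂1⟩ (fun g hg => hmin₁ g hg.1 hg.2.1 hg.2.2)
    fun g hg => hmin₂ g hg.1 hg.2.1 hg.2.2
end

section
/- Let κ ≥ 0 and λ > 0, and let b(t) = t be the risk-neutral unit strategy. Then a(t) = (1 + λκ/4) t − (λκ/4) t² is a unit trading strategy and is the best response to b: for every continuously differentiable unit trading strategy g, Cost_A(a, b) ≤ Cost_A(g, b). -/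
open Real

/-!
If `2 a' + λ (b' + κ b) = c` almost everywhere, completing the square turns the cost of any
strategy `g` into `∫ (g' - a')² - ∫ a'²` plus terms depending only on `g 0` and `g 1`, the term
`κ g g'` being an exact derivative. Hence `a` is optimal among the strategies with its endpoints,
and `g` loses exactly `∫ (g' - a')²` against it. For `b t = t` the equation makes `a'` affine of
slope `-λ κ / 2`.
-/

open MeasureTheory Set

/-- The Euler–Lagrange equation `2 a'' + λ (b'' + κ b') = 0` of the functional `costA κ lam · b`,
integrated once, with constant of integration `c`, so that no second derivative appears. -/
def IsEulerLagrange (κ lam c : ℝ) (a b : ℝ → ℝ) : Prop :=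
  ∀ᵐ t ∂volume.restrict (Ioc (0 : ℝ) 1), 2 * deriv a t + lam * (deriv b t + κ * b t) = c

theorem HasFiniteEnergy.of_contDiff_s7 {f : ℝ → ℝ} (hf : ContDiff ℝ 1 f) : HasFiniteEnergy f where
  absolutelyContinuous := hf.contDiffOn.absolutelyContinuousOnInterval
  memLp_deriv := by
    have hcont : Continuous (deriv f) := hf.continuous_deriv le_rfl
    exact (memLp_two_iff_integrable_sq hcont.aestronglyMeasurable).2
      (hcont.pow 2).integrableOn_Ioc

theorem integral_mul_deriv_self {f : ℝ → ℝ} {x y : ℝ}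
    (hf : AbsolutelyContinuousOnInterval f x y) :
    ∫ t in x..y, f t * deriv f t = (f y ^ 2 - f x ^ 2) / 2 := by
  have hparts := hf.integral_mul_deriv_eq_deriv_mul hf
  simp only [mul_comm (deriv f _)] at hparts
  linarith

section EulerLagrange

variable {κ lam c : ℝ} {a b g : ℝ → ℝ}

theorem IsEulerLagrange.costA_eq (h : IsEulerLagrange κ lam c a b)
    (ha : MemLp (deriv a) 2 (volume.restrict (Ioc 0 1))) (hg : HasFiniteEnergy g) :
    costA κ lam g b =
      (∫ t in (0 : ℝ)..1, (deriv g t - deriv a t) ^ 2) - (∫ t in (0 : ℝ)..1, deriv a t ^ 2)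
        + c * (g 1 - g 0) + κ * ((g 1 ^ 2 - g 0 ^ 2) / 2) := by
  have hgap : IntervalIntegrable (fun t ↦ (deriv g t - deriv a t) ^ 2) volume 0 1 :=
    (intervalIntegrable_iff_integrableOn_Ioc_of_le zero_le_one).2
      (hg.memLp_deriv.sub ha).integrable_sq
  have hsq : IntervalIntegrable (fun t ↦ deriv a t ^ 2) volume 0 1 :=
    (intervalIntegrable_iff_integrableOn_Ioc_of_le zero_le_one).2 ha.integrable_sq
  have hderiv : IntervalIntegrable (deriv g) volume 0 1 :=
    hg.absolutelyContinuous.intervalIntegrable_deriv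
  have hmul : IntervalIntegrable (fun t ↦ g t * deriv g t) volume 0 1 :=
    hderiv.continuousOn_mul hg.absolutelyContinuous.continuousOn
  calc costA κ lam g b
      = ∫ t in (0 : ℝ)..1, ((deriv g t - deriv a t) ^ 2 - deriv a t ^ 2
          + c * deriv g t + κ * (g t * deriv g t)) := by
        refine intervalIntegral.integral_congr_ae_restrict ?_
        rw [uIoc_of_le zero_le_one]
        filter_upwards [h] with t ht
        linear_combination deriv g t * ht
    _ = _ := by
        rw [intervalIntegral.integral_add ((hgap.sub hsq).add (hderiv.const_mul c))
            (hmul.const_mul κ),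
          intervalIntegral.integral_add (hgap.sub hsq) (hderiv.const_mul c),
          intervalIntegral.integral_sub hgap hsq, intervalIntegral.integral_const_mul,
          intervalIntegral.integral_const_mul, hg.absolutelyContinuous.integral_deriv_eq_sub,
          integral_mul_deriv_self hg.absolutelyContinuous]

theorem IsEulerLagrange.costA_eq_add_integral_sq (h : IsEulerLagrange κ lam c a b)
    (ha : HasFiniteEnergy a) (hg : HasFiniteEnergy g) (h0 : g 0 = a 0) (h1 : g 1 = a 1) :
    costA κ lam g b =
      costA κ lam a b + ∫ t in (0 : ℝ)..1, (deriv g t - deriv a t) ^ 2 := by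
  have hself : ∫ t in (0 : ℝ)..1, (deriv a t - deriv a t) ^ 2 = 0 := by simp
  rw [h.costA_eq ha.memLp_deriv hg, h.costA_eq ha.memLp_deriv ha, hself, h0, h1]
  ring

theorem IsEulerLagrange.costA_le (h : IsEulerLagrange κ lam c a b)
    (ha : HasFiniteEnergy a) (hg : HasFiniteEnergy g) (h0 : g 0 = a 0) (h1 : g 1 = a 1) :
    costA κ lam a b ≤ costA κ lam g b := by
  rw [h.costA_eq_add_integral_sq ha hg h0 h1]
  exact le_add_of_nonneg_right
    (intervalIntegral.integral_nonneg zero_le_one fun t _ ↦ sq_nonneg _)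

end EulerLagrange

theorem hasDerivAt_linear_sub_quadratic (p q t : ℝ) :
    HasDerivAt (fun s : ℝ ↦ p * s - q * s ^ 2) (p - 2 * q * t) t := by
  refine (((hasDerivAt_id t).const_mul p).sub
    ((hasDerivAt_pow 2 t).const_mul q)).congr_deriv ?_
  push_cast
  ring

theorem isEulerLagrange_riskNeutral (κ lam : ℝ) :
    IsEulerLagrange κ lam (2 + lam * κ / 2 + lam)
      (fun t ↦ (1 + lam * κ / 4) * t - lam * κ / 4 * t ^ 2) (fun t ↦ t) := by
  refine Filter.Eventually.of_forall fun t ↦ ?_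
  rw [(hasDerivAt_linear_sub_quadratic _ _ t).deriv, deriv_id'']
  ring

theorem best_response_to_risk_neutral_general (κ lam : ℝ)
    (a b : ℝ → ℝ) (hb : ∀ t : ℝ, b t = t)
    (ha : ∀ t : ℝ, a t = (1 + lam * κ / 4) * t - (lam * κ / 4) * t^2) :
    a 0 = 0 ∧ a 1 = 1 ∧
      ∀ g : ℝ → ℝ, HasFiniteEnergy g → g 0 = 0 → g 1 = 1 →
        costA κ lam a b ≤ costA κ lam g b := by
  have a_zero : a 0 = 0 := by rw [ha]; ring
  have a_one : a 1 = 1 := by rw [ha]; ring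
  refine ⟨a_zero, a_one, fun g hg g_zero g_one ↦ ?_⟩
  have hEL : IsEulerLagrange κ lam (2 + lam * κ / 2 + lam) a b := by
    rw [funext ha, funext hb]
    exact isEulerLagrange_riskNeutral κ lam
  have a_energy : HasFiniteEnergy a := by
    rw [funext ha]
    exact .of_contDiff (by fun_prop)
  exact hEL.costA_le a_energy hg (g_zero.trans a_zero.symm) (g_one.trans a_one.symm)

theorem best_response_to_risk_neutral (κ lam : ℝ) (hκ : 0 ≤ κ) (hlam : 0 < lam)
    (a b : ℝ → ℝ) (hb : ∀ t : ℝ, b t = t)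
    (ha : ∀ t : ℝ, a t = (1 + lam * κ / 4) * t - (lam * κ / 4) * t^2) :
    a 0 = 0 ∧ a 1 = 1 ∧
      ∀ g : ℝ → ℝ, ContDiff ℝ 1 g → g 0 = 0 → g 1 = 1 →
        costA κ lam a b ≤ costA κ lam g b :=
  have ⟨a_zero, a_one, hle⟩ := best_response_to_risk_neutral_general κ lam a b hb ha
  ⟨a_zero, a_one, fun g hg ↦ hle g (.of_contDiff hg)⟩
end

section
/- Let κ > 0 and λ > 0, and define a_eq(t) = −(1 − e^{−κt/3})(−e^{κ/3}(e^{κ/3} + e^{2κ/3} + 1)(λ+1) + (λ−1)e^{κt/3} + (λ−1)e^{2κt/3} + (λ−1)e^{κt}) / (2(e^{κ} − 1)) and b_eq(t) = (1 − e^{−κt/3})(e^{κ/3}(e^{κ/3} + e^{2κ/3} + 1)(λ+1) + (λ−1)e^{κt/3} + (λ−1)e^{2κt/3} + (λ−1)e^{κt}) / (2(e^{κ} − 1)λ). Then a_eq(0) = 0, a_eq(1) = 1, b_eq(0) = 0, b_eq(1) = 1, and the pair satisfies the equilibrium equations a_eq''(t) = −(λ/2)(b_eq''(t) + κ b_eq'(t))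 and b_eq''(t) = −(1/(2λ))(a_eq''(t) + κ a_eq'(t)) for all t ∈ [0,1]. -/
open Real

/-!
Adding and subtracting the two equations decouples the system: `a' + λ b'` solves `s' = -(κ/3) s`
and `a' - λ b'` solves `d' = κ d`. Hence `a + λ b` and `a - λ b` are exponential ramps of rates
`-κ/3` and `κ`, and the values `1 + λ` and `1 - λ` at time `1` fix their amplitudes. The paper's
closed forms are recovered from `(1 - x⁻¹) (x + x² + x³) = x³ - 1` with `x = e^{κt/3}`.
-/

/-- The unit strategy trading at a speed proportional to `exp (r * t)`, normalised to run from `0`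
at time `0` to `1` at time `1`. For `r = 0` the division by zero makes it the zero function, not
the limiting constant-speed strategy. -/
noncomputable def expRamp (r t : ℝ) : ℝ :=
  (Real.exp (r * t) - 1) / (Real.exp r - 1)

/-- The equilibrium strategy `a_eq` of the unit trader, in the closed form of the paper. -/
noncomputable def equilibriumA (κ lam t : ℝ) : ℝ :=
  -((1 - Real.exp (-κ * t / 3)) *
      (-(Real.exp (κ / 3) * (Real.exp (κ / 3) + Real.exp (2 * κ / 3) + 1) * (lam + 1))
        + (lam - 1) * Real.exp (κ * t / 3)
        + (lam - 1) * Real.exp (2 * κ * t / 3)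
        + (lam - 1) * Real.exp (κ * t)))
    / (2 * (Real.exp κ - 1))

/-- The equilibrium strategy `b_eq` of the trader of scale `lam`, in the closed form of the
paper. -/
noncomputable def equilibriumB (κ lam t : ℝ) : ℝ :=
  ((1 - Real.exp (-κ * t / 3)) *
      (Real.exp (κ / 3) * (Real.exp (κ / 3) + Real.exp (2 * κ / 3) + 1) * (lam + 1)
        + (lam - 1) * Real.exp (κ * t / 3)
        + (lam - 1) * Real.exp (2 * κ * t / 3)
        + (lam - 1) * Real.exp (κ * t)))
    / (2 * (Real.exp κ - 1) * lam)

theorem exp_sub_one_ne_zero {r : ℝ} (hr : r ≠ 0) : Real.exp r - 1 ≠ 0 :=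
  sub_ne_zero.2 (mt (Real.exp_eq_one_iff r).1 hr)

theorem expRamp_zero (r : ℝ) : expRamp r 0 = 0 := by
  simp [expRamp]

theorem expRamp_one {r : ℝ} (hr : r ≠ 0) : expRamp r 1 = 1 := by
  rw [expRamp, mul_one, div_self (exp_sub_one_ne_zero hr)]

theorem hasDerivAt_expRamp (r t : ℝ) :
    HasDerivAt (expRamp r) (r * Real.exp (r * t) / (Real.exp r - 1)) t := by
  rw [mul_comm r (Real.exp (r * t))]
  exact ((hasDerivAt_const_mul r).exp.sub_const 1).div_const (Real.exp r - 1)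

theorem deriv_expRamp (r : ℝ) :
    deriv (expRamp r) = fun t => r * expRamp r t + r / (Real.exp r - 1) := by
  funext t
  rw [(hasDerivAt_expRamp r t).deriv, expRamp]
  ring

theorem differentiable_expRamp (r : ℝ) : Differentiable ℝ (expRamp r) :=
  fun t => (hasDerivAt_expRamp r t).differentiableAt

theorem differentiable_deriv_expRamp (r : ℝ) : Differentiable ℝ (deriv (expRamp r)) := by
  rw [deriv_expRamp]
  exact ((differentiable_expRamp r).const_mul r).add_const _

theorem deriv_deriv_expRamp (r t : ℝ) :
    deriv (deriv (expRamp r)) t = r * deriv (expRamp r) t := by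
  conv_lhs => rw [deriv_expRamp]
  rw [deriv_add_const, deriv_const_mul_field]

theorem deriv_const_mul_add_const_mul {f g : ℝ → ℝ} (hf : Differentiable ℝ f)
    (hg : Differentiable ℝ g) (c d : ℝ) :
    deriv (fun t => c * f t + d * g t) = fun t => c * deriv f t + d * deriv g t :=
  funext fun t => (((hf t).hasDerivAt.const_mul c).add ((hg t).hasDerivAt.const_mul d)).deriv

theorem one_sub_exp_neg_div_three_mul_sum (s : ℝ) :
    (1 - Real.exp (-s / 3)) * (Real.exp (s / 3) + Real.exp (2 * s / 3) + Real.exp s) =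
      Real.exp s - 1 := by
  have hcancel : Real.exp (-s / 3) * Real.exp (s / 3) = 1 := by
    rw [← Real.exp_add, ← add_div, neg_add_cancel, zero_div, Real.exp_zero]
  have hsq : Real.exp (2 * s / 3) = Real.exp (s / 3) ^ 2 := by
    rw [← Real.exp_nat_mul, Nat.cast_ofNat, mul_div_assoc]
  have hcube : Real.exp s = Real.exp (s / 3) ^ 3 := by
    rw [← Real.exp_nat_mul, Nat.cast_ofNat, mul_div_cancel₀ s three_ne_zero]
  rw [hsq, hcube]
  linear_combination (-1 - Real.exp (s / 3) - Real.exp (s / 3) ^ 2) * hcancel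

theorem exp_div_three_mul_sum (s : ℝ) :
    Real.exp (s / 3) * (Real.exp (s / 3) + Real.exp (2 * s / 3) + 1) =
      Real.exp (s / 3) + Real.exp (2 * s / 3) + Real.exp s := by
  rw [mul_add, mul_add, mul_one, ← Real.exp_add, ← Real.exp_add]
  ring_nf

theorem expRamp_eq_mul_sum_div (κ t : ℝ) :
    expRamp κ t = (1 - Real.exp (-κ * t / 3)) *
      (Real.exp (κ * t / 3) + Real.exp (2 * κ * t / 3) + Real.exp (κ * t)) /
        (Real.exp κ - 1) := by
  rw [expRamp, ← one_sub_exp_neg_div_three_mul_sum (κ * t), neg_mul, mul_assoc 2 κ t]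

theorem expRamp_neg_div_three {κ : ℝ} (hκ : κ ≠ 0) (t : ℝ) :
    expRamp (-κ / 3) t = (1 - Real.exp (-κ * t / 3)) *
      (Real.exp (κ / 3) * (Real.exp (κ / 3) + Real.exp (2 * κ / 3) + 1)) /
        (Real.exp κ - 1) := by
  have hne : Real.exp (-κ / 3) - 1 ≠ 0 := exp_sub_one_ne_zero (by simpa using hκ)
  rw [expRamp, exp_div_three_mul_sum, div_eq_div_iff hne (exp_sub_one_ne_zero hκ),
    ← one_sub_exp_neg_div_three_mul_sum κ, div_mul_eq_mul_div]
  ring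

theorem equilibriumA_eq_expRamp {κ : ℝ} (hκ : κ ≠ 0) (lam : ℝ) :
    equilibriumA κ lam = fun t =>
      (1 + lam) / 2 * expRamp (-κ / 3) t + (1 - lam) / 2 * expRamp κ t := by
  funext t
  rw [equilibriumA, expRamp_neg_div_three hκ, expRamp_eq_mul_sum_div κ t]
  generalize Real.exp κ - 1 = E
  ring

theorem equilibriumB_eq_expRamp {κ : ℝ} (hκ : κ ≠ 0) (lam : ℝ) :
    equilibriumB κ lam = fun t =>
      (1 + lam) / (2 * lam) * expRamp (-κ / 3) t + (lam - 1) / (2 * lam) * expRamp κ t := by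
  funext t
  rw [equilibriumB, expRamp_neg_div_three hκ, expRamp_eq_mul_sum_div κ t]
  generalize Real.exp κ - 1 = E
  ring

theorem coupled_iff_decoupled {κ lam : ℝ} (hlam : lam ≠ 0) (a' a'' b' b'' : ℝ) :
    (a'' = -(lam / 2) * (b'' + κ * b') ∧ b'' = -(1 / (2 * lam)) * (a'' + κ * a')) ↔
      (a'' + lam * b'' = -κ / 3 * (a' + lam * b') ∧ a'' - lam * b'' = κ * (a' - lam * b')) := by
  have hsecond : b'' = -(1 / (2 * lam)) * (a'' + κ * a') ↔ lam * b'' = -(a'' + κ * a') / 2 := by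
    field_simp
  rw [hsecond]
  constructor <;> rintro ⟨h₁, h₂⟩ <;> constructor <;> linarith

theorem equilibrium_closed_form_satisfies_equations_general {κ lam : ℝ} (hκ : κ ≠ 0)
    (hlam : lam ≠ 0) :
    equilibriumA κ lam 0 = 0 ∧ equilibriumA κ lam 1 = 1 ∧
      equilibriumB κ lam 0 = 0 ∧ equilibriumB κ lam 1 = 1 ∧
      ∀ t : ℝ,
        deriv (deriv (equilibriumA κ lam)) t =
            -(lam / 2) * (deriv (deriv (equilibriumB κ lam)) t
              + κ * deriv (equilibriumB κ lam) t) ∧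
          deriv (deriv (equilibriumB κ lam)) t =
            -(1 / (2 * lam)) * (deriv (deriv (equilibriumA κ lam)) t
              + κ * deriv (equilibriumA κ lam) t) := by
  have hκ3 : -κ / 3 ≠ 0 := by simpa using hκ
  rw [equilibriumA_eq_expRamp hκ, equilibriumB_eq_expRamp hκ]
  simp only [expRamp_zero, expRamp_one hκ, expRamp_one hκ3]
  refine ⟨by ring, by ring, by ring, by field_simp; ring, fun t => ?_⟩
  simp only [deriv_const_mul_add_const_mul (differentiable_expRamp _) (differentiable_expRamp _),
    deriv_const_mul_add_const_mul (differentiable_deriv_expRamp _)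
      (differentiable_deriv_expRamp _), coupled_iff_decoupled hlam, deriv_deriv_expRamp]
  constructor <;> field_simp <;> ring

theorem equilibrium_closed_form_satisfies_equations (κ lam : ℝ) (hκ : 0 < κ)
    (hlam : 0 < lam) (aeq beq : ℝ → ℝ)
    (haeq : ∀ t : ℝ, aeq t =
      -((1 - Real.exp (-κ * t / 3)) *
          (-(Real.exp (κ/3) * (Real.exp (κ/3) + Real.exp (2*κ/3) + 1) * (lam + 1))
            + (lam - 1) * Real.exp (κ * t / 3)
            + (lam - 1) * Real.exp (2 * κ * t / 3)
            + (lam - 1) * Real.exp (κ * t)))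
        / (2 * (Real.exp κ - 1)))
    (hbeq : ∀ t : ℝ, beq t =
      ((1 - Real.exp (-κ * t / 3)) *
          (Real.exp (κ/3) * (Real.exp (κ/3) + Real.exp (2*κ/3) + 1) * (lam + 1)
            + (lam - 1) * Real.exp (κ * t / 3)
            + (lam - 1) * Real.exp (2 * κ * t / 3)
            + (lam - 1) * Real.exp (κ * t)))
        / (2 * (Real.exp κ - 1) * lam)) :
    aeq 0 = 0 ∧ aeq 1 = 1 ∧ beq 0 = 0 ∧ beq 1 = 1 ∧
      ∀ t ∈ Set.Icc (0:ℝ) 1,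
        deriv (deriv aeq) t = -(lam/2) * (deriv (deriv beq) t + κ * deriv beq t) ∧
        deriv (deriv beq) t = -(1/(2*lam)) * (deriv (deriv aeq) t + κ * deriv aeq t) := by
  obtain rfl : aeq = equilibriumA κ lam := funext haeq
  obtain rfl : beq = equilibriumB κ lam := funext hbeq
  have ⟨ha₀, ha₁, hb₀, hb₁, heq⟩ :=
    equilibrium_closed_form_satisfies_equations_general hκ.ne' hlam.ne'
  exact ⟨ha₀, ha₁, hb₀, hb₁, fun t _ => heq t⟩
end

section
/- Let κ > 0 and λ > 0, and define a_eq(t) = −(1 − e^{−κt/3})(−e^{κ/3}(e^{κ/3} + e^{2κ/3} + 1)(λ+1) + (λ−1)e^{κt/3} + (λ−1)e^{2κt/3} + (λ−1)e^{κt}) / (2(e^{κ} − 1)) and b_eq(t) = (1 − e^{−κt/3})(e^{κ/3}(e^{κ/3} + e^{2κ/3} + 1)(λ+1) + (λ−1)e^{κt/3} + (λ−1)e^{2κt/3} + (λ−1)e^{κt}) / (2(e^{κ} − 1)λ). Then (a_eq, b_eq) is a two-trader equilibrium: for every continuously differentiable unit trading strategy g, Cost_A(a_eq, b_eq) ≤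 Cost_A(g, b_eq) and Cost_B(b_eq, a_eq) ≤ Cost_B(g, a_eq). -/
open Real

/-- The total cost of trader B trading the `lam`-scaled strategy `b` in competition
with the unit strategy `a`, with market impact coefficient `κ`. -/
noncomputable def costB (κ lam : ℝ) (b a : ℝ → ℝ) : ℝ :=
  ∫ t in (0:ℝ)..1,
    ((deriv a t + lam * deriv b t) * (lam * deriv b t)
      + κ * (a t + lam * b t) * (lam * deriv b t))

/-!
Write `x` and `y` for the positions of the two traders, sizes included (`x = a`, `y = λ b`). The
trader holding `x` pays `∫ (x' + y') x' + κ (x + y) x'`, whose Euler–Lagrange equation integrates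
once to `2 x' + y' + κ y = C`. Since the cost is convex in `x` up to boundary terms, every solution
of this first-order equation is a best response to `y`.

Imposing the equation on both traders decouples `x + y` from `x - y`: the sum satisfies
`3 s' + κ s = const` and the difference `d' - κ d = const`. Hence both are multiples of exponential
profiles, with rates `-κ / 3` and `κ`, and the sizes of the traders fix the multiples.
-/

open MeasureTheory
open scoped Interval

/-- The `H¹` paths on the interval between `α` and `β`: the positions for which trading costs are
finite. The derivative is the pointwise one, which exists almost everywhere on the interval. -/
structure HasFiniteEnergyOn (x : ℝ → ℝ) (α β : ℝ) : Prop where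
  absolutelyContinuous : AbsolutelyContinuousOnInterval x α β
  memLp_deriv : MemLp (deriv x) 2 (volume.restrict (Ι α β))

/-- The cost, over the period from `α` to `β`, of building the position `x` while a competitor
builds the position `y`. The sizes of the traders are part of `x` and `y`, so that the same
functional serves both traders. -/
noncomputable def impactCost (κ α β : ℝ) (x y : ℝ → ℝ) : ℝ :=
  ∫ t in α..β, ((deriv x t + deriv y t) * deriv x t + κ * (x t + y t) * deriv x t)

theorem costA_eq_impactCost (κ lam : ℝ) (a b : ℝ → ℝ) :
    costA κ lam a b = impactCost κ 0 1 a (fun t => lam * b t) := by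
  simp only [costA, impactCost, deriv_const_mul_field]

theorem costB_eq_impactCost (κ lam : ℝ) (b a : ℝ → ℝ) :
    costB κ lam b a = impactCost κ 0 1 (fun t => lam * b t) a := by
  simp only [costB, impactCost, deriv_const_mul_field, add_comm]

namespace HasFiniteEnergyOn

variable {α β : ℝ} {x y : ℝ → ℝ}

theorem of_contDiff (hx : ContDiff ℝ 1 x) : HasFiniteEnergyOn x α β where
  absolutelyContinuous := hx.contDiffOn.absolutelyContinuousOnInterval
  memLp_deriv := by
    have hx' : Continuous (deriv x) := hx.continuous_deriv le_rfl
    rw [memLp_two_iff_integrable_sq hx'.aestronglyMeasurable, ← IntegrableOn,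
      ← intervalIntegrable_iff]
    exact (hx'.pow 2).intervalIntegrable α β

theorem const_mul (c : ℝ) (hx : HasFiniteEnergyOn x α β) :
    HasFiniteEnergyOn (fun t => c * x t) α β where
  absolutelyContinuous := hx.absolutelyContinuous.const_mul c
  memLp_deriv := by
    simpa only [deriv_const_mul_field'] using hx.memLp_deriv.const_mul c

theorem intervalIntegrable_impactCost (κ : ℝ) (hx : HasFiniteEnergyOn x α β)
    (hy : HasFiniteEnergyOn y α β) :
    IntervalIntegrable
      (fun t => (deriv x t + deriv y t) * deriv x t + κ * (x t + y t) * deriv x t) volume α β := by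
  have hspread : IntervalIntegrable (fun t => (deriv x t + deriv y t) * deriv x t) volume α β :=
    intervalIntegrable_iff.2 ((hx.memLp_deriv.add hy.memLp_deriv).integrable_mul hx.memLp_deriv)
  have hposition : ContinuousOn (fun t => κ * (x t + y t)) [[α, β]] :=
    continuousOn_const.mul
      (hx.absolutelyContinuous.continuousOn.add hy.absolutelyContinuous.continuousOn)
  exact hspread.add
    (hx.absolutelyContinuous.intervalIntegrable_deriv.continuousOn_mul hposition)

end HasFiniteEnergyOn

section FirstIntegral

variable {κ C α β : ℝ} {x y g : ℝ → ℝ}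

theorem impactCost_sub_impactCost_of_firstIntegral (hx : HasFiniteEnergyOn x α β)
    (hy : HasFiniteEnergyOn y α β) (hg : HasFiniteEnergyOn g α β)
    (hC : ∀ᵐ t, t ∈ Ι α β → 2 * deriv x t + deriv y t + κ * y t = C)
    (hα : g α = x α) (hβ : g β = x β) :
    impactCost κ α β g y - impactCost κ α β x y = ∫ t in α..β, (deriv g t - deriv x t) ^ 2 := by
  -- The difference of the integrands is `(g' - x') ^ 2` plus the derivative of `Φ`.
  let Φ : ℝ → ℝ := fun t => C * (g t - x t) + κ / 2 * (g t * g t - x t * x t)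
  have hΦ : AbsolutelyContinuousOnInterval Φ α β :=
    ((hg.absolutelyContinuous.sub hx.absolutelyContinuous).const_mul C).add
      (((hg.absolutelyContinuous.mul hg.absolutelyContinuous).sub
        (hx.absolutelyContinuous.mul hx.absolutelyContinuous)).const_mul (κ / 2))
  have hΦ_integral : ∫ t in α..β, deriv Φ t = 0 := by
    simp [hΦ.integral_deriv_eq_sub, Φ, hα, hβ]
  have hsq : IntervalIntegrable (fun t => (deriv g t - deriv x t) ^ 2) volume α β :=
    intervalIntegrable_iff.2 (hg.memLp_deriv.sub hx.memLp_deriv).integrable_sq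
  calc impactCost κ α β g y - impactCost κ α β x y
      = ∫ t in α..β, (((deriv g t + deriv y t) * deriv g t + κ * (g t + y t) * deriv g t)
          - ((deriv x t + deriv y t) * deriv x t + κ * (x t + y t) * deriv x t)) :=
        (intervalIntegral.integral_sub (hg.intervalIntegrable_impactCost κ hy)
          (hx.intervalIntegrable_impactCost κ hy)).symm
    _ = ∫ t in α..β, ((deriv g t - deriv x t) ^ 2 + deriv Φ t) := by
        refine intervalIntegral.integral_congr_ae ?_
        filter_upwards [hC, hg.absolutelyContinuous.ae_differentiableAt,
          hx.absolutelyContinuous.ae_differentiableAt] with t hCt hgt hxt ht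
        have hg' := (hgt (Set.uIoc_subset_uIcc ht)).hasDerivAt
        have hx' := (hxt (Set.uIoc_subset_uIcc ht)).hasDerivAt
        have hΦ' : HasDerivAt Φ
            (C * (deriv g t - deriv x t) + κ * (g t * deriv g t - x t * deriv x t)) t :=
          (((hg'.sub hx').const_mul C).add
            (((hg'.mul hg').sub (hx'.mul hx')).const_mul (κ / 2))).congr_deriv (by ring)
        rw [hΦ'.deriv, ← hCt ht]
        ring
    _ = ∫ t in α..β, (deriv g t - deriv x t) ^ 2 := by
        rw [intervalIntegral.integral_add hsq hΦ.intervalIntegrable_deriv, hΦ_integral, add_zero]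

theorem impactCost_le_of_firstIntegral (hαβ : α ≤ β) (hx : HasFiniteEnergyOn x α β)
    (hy : HasFiniteEnergyOn y α β) (hg : HasFiniteEnergyOn g α β)
    (hC : ∀ᵐ t, t ∈ Ι α β → 2 * deriv x t + deriv y t + κ * y t = C)
    (hα : g α = x α) (hβ : g β = x β) :
    impactCost κ α β x y ≤ impactCost κ α β g y := by
  rw [← sub_nonneg, impactCost_sub_impactCost_of_firstIntegral hx hy hg hC hα hβ]
  exact intervalIntegral.integral_nonneg hαβ fun t _ => sq_nonneg _

end FirstIntegral

/-- The solution of `s' = r s + const` with `s 0 = 0` and `s 1 = 1`, from which equilibria are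
built. At `r = 0`, where the profile should be linear, the division gives `0`. -/
noncomputable def expProfile (r t : ℝ) : ℝ :=
  (1 - exp (r * t)) / (1 - exp r)

@[simp]
theorem expProfile_zero_right (r : ℝ) : expProfile r 0 = 0 := by
  simp [expProfile]

theorem one_sub_exp_ne_zero {r : ℝ} (hr : r ≠ 0) : 1 - exp r ≠ 0 :=
  sub_ne_zero.2 fun h => hr (exp_eq_one_iff r |>.1 h.symm)

theorem expProfile_one_right {r : ℝ} (hr : r ≠ 0) : expProfile r 1 = 1 := by
  rw [expProfile, mul_one, div_self (one_sub_exp_ne_zero hr)]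

theorem contDiff_expProfile (r : ℝ) : ContDiff ℝ 1 (expProfile r) := by
  unfold expProfile
  fun_prop

theorem hasDerivAt_expProfile (r t : ℝ) :
    HasDerivAt (expProfile r) (r * expProfile r t - r / (1 - exp r)) t := by
  have hexp : HasDerivAt (fun t => exp (r * t)) (exp (r * t) * (r * 1)) t :=
    ((hasDerivAt_id t).const_mul r).exp
  refine ((hexp.const_sub 1).div_const (1 - exp r)).congr_deriv ?_
  rw [expProfile]
  ring

/-- The equilibrium position of a trader of size `p` competing with a trader of size `q`: it makes
the sum of the two positions `p + q` times, and their difference `p - q` times, a unit profile. -/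
noncomputable def equilibriumPath (κ p q t : ℝ) : ℝ :=
  (p + q) / 2 * expProfile (-κ / 3) t + (p - q) / 2 * expProfile κ t

theorem equilibriumPath_zero_right (κ p q : ℝ) : equilibriumPath κ p q 0 = 0 := by
  simp [equilibriumPath]

theorem equilibriumPath_one_right {κ : ℝ} (hκ : κ ≠ 0) (p q : ℝ) : equilibriumPath κ p q 1 = p := by
  rw [equilibriumPath, expProfile_one_right hκ, expProfile_one_right (by simpa using hκ)]
  ring

theorem contDiff_equilibriumPath (κ p q : ℝ) : ContDiff ℝ 1 (equilibriumPath κ p q) :=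
  (contDiff_const.mul (contDiff_expProfile _)).add (contDiff_const.mul (contDiff_expProfile _))

theorem deriv_equilibriumPath (κ p q t : ℝ) :
    deriv (equilibriumPath κ p q) t =
      (p + q) / 2 * (-κ / 3 * expProfile (-κ / 3) t - -κ / 3 / (1 - exp (-κ / 3)))
        + (p - q) / 2 * (κ * expProfile κ t - κ / (1 - exp κ)) :=
  (((hasDerivAt_expProfile _ t).const_mul _).add
    ((hasDerivAt_expProfile _ t).const_mul _)).deriv

theorem firstIntegral_equilibriumPath (κ p q t : ℝ) :
    2 * deriv (equilibriumPath κ p q) t + deriv (equilibriumPath κ q p) t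
        + κ * equilibriumPath κ q p t =
      (p + q) / 2 * (κ / (1 - exp (-κ / 3))) - (p - q) / 2 * (κ / (1 - exp κ)) := by
  rw [deriv_equilibriumPath, deriv_equilibriumPath, equilibriumPath]
  ring

theorem impactCost_equilibriumPath_le {κ p q : ℝ} (hκ : κ ≠ 0) {g : ℝ → ℝ}
    (hg : HasFiniteEnergyOn g 0 1) (hg₀ : g 0 = 0) (hg₁ : g 1 = p) :
    impactCost κ 0 1 (equilibriumPath κ p q) (equilibriumPath κ q p) ≤
      impactCost κ 0 1 g (equilibriumPath κ q p) :=
  impactCost_le_of_firstIntegral zero_le_one (.of_contDiff (contDiff_equilibriumPath κ p q))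
    (.of_contDiff (contDiff_equilibriumPath κ q p)) hg
    (.of_forall fun t _ => firstIntegral_equilibriumPath κ p q t)
    (by rw [hg₀, equilibriumPath_zero_right]) (by rw [hg₁, equilibriumPath_one_right hκ])

theorem one_sub_exp_mul_geom_sum (s : ℝ) :
    (1 - exp (-s / 3)) * (exp (s / 3) + exp (2 * s / 3) + exp s) = exp s - 1 := by
  have h_first : exp (-s / 3) * exp (s / 3) = 1 := by
    rw [← exp_add, ← exp_zero]; congr 1; ring
  have h_second : exp (-s / 3) * exp (2 * s / 3) = exp (s / 3) := by
    rw [← exp_add]; congr 1; ring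
  have h_third : exp (-s / 3) * exp s = exp (2 * s / 3) := by
    rw [← exp_add]; congr 1; ring
  linear_combination -h_first - h_second - h_third

theorem expProfile_eq_geom_sum (κ t : ℝ) :
    expProfile κ t = (1 - exp (-κ * t / 3)) *
      (exp (κ * t / 3) + exp (2 * κ * t / 3) + exp (κ * t)) / (exp κ - 1) := by
  rw [neg_mul, mul_assoc 2, one_sub_exp_mul_geom_sum, expProfile, ← neg_div_neg_eq, neg_sub,
    neg_sub]

theorem expProfile_neg_third_eq_geom_sum (κ t : ℝ) :
    expProfile (-κ / 3) t = (1 - exp (-κ * t / 3)) *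
      (exp (κ / 3) * (exp (κ / 3) + exp (2 * κ / 3) + 1)) / (exp κ - 1) := by
  have h_sum : exp (κ / 3) * (exp (κ / 3) + exp (2 * κ / 3) + 1) =
      exp (κ / 3) + exp (2 * κ / 3) + exp κ := by
    have h_second : exp (κ / 3) * exp (κ / 3) = exp (2 * κ / 3) := by
      rw [← exp_add]; congr 1; ring
    have h_third : exp (κ / 3) * exp (2 * κ / 3) = exp κ := by
      rw [← exp_add]; congr 1; ring
    linear_combination h_second + h_third
  rw [expProfile, div_mul_eq_mul_div, h_sum, ← one_sub_exp_mul_geom_sum κ,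
    mul_div_mul_right _ _ (by positivity)]

theorem equilibriumPath_eq_closed_form (κ p q t : ℝ) :
    equilibriumPath κ p q t =
      (1 - exp (-κ * t / 3)) *
          (exp (κ / 3) * (exp (κ / 3) + exp (2 * κ / 3) + 1) * (p + q)
            + (p - q) * exp (κ * t / 3) + (p - q) * exp (2 * κ * t / 3) + (p - q) * exp (κ * t))
        / (2 * (exp κ - 1)) := by
  rw [equilibriumPath, expProfile_neg_third_eq_geom_sum, expProfile_eq_geom_sum,
    div_mul_eq_div_div]
  ring

theorem closed_form_is_two_trader_equilibrium_general (κ lam : ℝ) (hκ : κ ≠ 0)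
    (hlam : lam ≠ 0) (aeq beq : ℝ → ℝ)
    (haeq : ∀ t : ℝ, aeq t =
      -((1 - Real.exp (-κ * t / 3)) *
          (-(Real.exp (κ/3) * (Real.exp (κ/3) + Real.exp (2*κ/3) + 1) * (lam + 1))
            + (lam - 1) * Real.exp (κ * t / 3)
            + (lam - 1) * Real.exp (2 * κ * t / 3)
            + (lam - 1) * Real.exp (κ * t)))
        / (2 * (Real.exp κ - 1)))
    (hbeq : ∀ t : ℝ, beq t =
      ((1 - Real.exp (-κ * t / 3)) *
          (Real.exp (κ/3) * (Real.exp (κ/3) + Real.exp (2*κ/3) + 1) * (lam + 1)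
            + (lam - 1) * Real.exp (κ * t / 3)
            + (lam - 1) * Real.exp (2 * κ * t / 3)
            + (lam - 1) * Real.exp (κ * t)))
        / (2 * (Real.exp κ - 1) * lam)) :
    ∀ g : ℝ → ℝ, HasFiniteEnergyOn g 0 1 → g 0 = 0 → g 1 = 1 →
      costA κ lam aeq beq ≤ costA κ lam g beq ∧
      costB κ lam beq aeq ≤ costB κ lam g aeq := by
  have hA : aeq = equilibriumPath κ 1 lam := by
    funext t
    rw [haeq, equilibriumPath_eq_closed_form]
    ring
  have hB : (fun t => lam * beq t) = equilibriumPath κ lam 1 := by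
    funext t
    rw [hbeq, equilibriumPath_eq_closed_form]
    field_simp
  intro g hg hg₀ hg₁
  constructor
  · rw [costA_eq_impactCost, costA_eq_impactCost, hA, hB]
    exact impactCost_equilibriumPath_le hκ hg hg₀ hg₁
  · rw [costB_eq_impactCost, costB_eq_impactCost, hA, hB]
    exact impactCost_equilibriumPath_le hκ (hg.const_mul lam) (by rw [hg₀, mul_zero])
      (by rw [hg₁, mul_one])

theorem closed_form_is_two_trader_equilibrium (κ lam : ℝ) (hκ : 0 < κ)
    (hlam : 0 < lam) (aeq beq : ℝ → ℝ)
    (haeq : ∀ t : ℝ, aeq t =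
      -((1 - Real.exp (-κ * t / 3)) *
          (-(Real.exp (κ/3) * (Real.exp (κ/3) + Real.exp (2*κ/3) + 1) * (lam + 1))
            + (lam - 1) * Real.exp (κ * t / 3)
            + (lam - 1) * Real.exp (2 * κ * t / 3)
            + (lam - 1) * Real.exp (κ * t)))
        / (2 * (Real.exp κ - 1)))
    (hbeq : ∀ t : ℝ, beq t =
      ((1 - Real.exp (-κ * t / 3)) *
          (Real.exp (κ/3) * (Real.exp (κ/3) + Real.exp (2*κ/3) + 1) * (lam + 1)
            + (lam - 1) * Real.exp (κ * t / 3)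
            + (lam - 1) * Real.exp (2 * κ * t / 3)
            + (lam - 1) * Real.exp (κ * t)))
        / (2 * (Real.exp κ - 1) * lam)) :
    ∀ g : ℝ → ℝ, ContDiff ℝ 1 g → g 0 = 0 → g 1 = 1 →
      costA κ lam aeq beq ≤ costA κ lam g beq ∧
      costB κ lam beq aeq ≤ costB κ lam g aeq :=
  fun g hg => closed_form_is_two_trader_equilibrium_general κ lam hκ.ne' hlam.ne' aeq beq haeq
    hbeq g (.of_contDiff hg)
end
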